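/- arXiv:math/0202083 — 2 statements merged into one kernel-verified Lean document; each statement's English description precedes it below -/
import Mathlib

section
/- Let k > 0 be real. Then for every u ∈ ℂ, D_k(u) = Γ(k+1/2) Σ_{n=0}^∞ (u/2)^{2n}/(n! Γ(n+k+1/2)) + (u/(2k+1)) Γ(k+3/2) Σ_{n=0}^∞ (u/2)^{2n}/(n! Γ(n+k+3/2)), where both series converge absolutely. (Equivalently, D_k(u) = j_{k−1/2}(iu) + (u/(2k+1)) j_{k+1/2}(iu), with j_α the normalized spherical Bessel function j_α(z) = Γ(α+1) Σ_{n=0}^∞ (−1)ⁿ (z/2)^{2n}/(n! Γ(n+α+1)).) -/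
open MeasureTheory Filter Set

/-- The rank-one Dunkl kernel, defined by its integral representation. -/
noncomputable def Dk (k : ℝ) (u : ℂ) : ℂ :=
  ((Real.Gamma (k + 1/2) / (Real.Gamma (1/2) * Real.Gamma k) : ℝ) : ℂ) *
    ∫ t in Icc (-1 : ℝ) 1,
      Complex.exp ((t : ℂ) * u) * (((1 - t) ^ (k - 1) * (1 + t) ^ k : ℝ) : ℂ)

lemma dk_gamma_half (n : ℕ) :
    Real.Gamma ((n : ℝ) + 1/2) * 4 ^ n * n.factorial = (2 * n).factorial * Real.Gamma (1/2) := by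
  induction n with
  | zero => simp
  | succ n ih =>
    have h1 : ((n + 1 : ℕ) : ℝ) + 1/2 = ((n : ℝ) + 1/2) + 1 := by push_cast; ring
    rw [h1, Real.Gamma_add_one (by positivity), show 2 * (n + 1) = (2 * n + 1) + 1 by ring,
      Nat.factorial_succ, Nat.factorial_succ, Nat.factorial_succ]
    push_cast
    linear_combination (4 * (n + 1/2) * (n + 1) : ℝ) * ih

noncomputable def dkh (k : ℝ) (m : ℕ) (t : ℝ) : ℂ := ((t ^ m * (1 - t ^ 2) ^ (k - 1) : ℝ) : ℂ)

lemma dk_image : (fun t : ℝ => t ^ 2) '' (Ioo 0 1) = Ioo 0 1 := by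
  ext x
  constructor
  · rintro ⟨t, ⟨h0, h1⟩, rfl⟩
    exact ⟨by positivity, by simp only; nlinarith⟩
  · rintro ⟨h0, h1⟩
    refine ⟨Real.sqrt x, ⟨Real.sqrt_pos.2 h0, ?_⟩, Real.sq_sqrt h0.le⟩
    rw [Real.sqrt_lt' one_pos]; simpa using h1

lemma dk_half (k : ℝ) (hk : 0 < k) (n : ℕ) :
    IntegrableOn (dkh k (2 * n)) (Ioo 0 1) ∧
    2 * ∫ t in Ioo (0:ℝ) 1, dkh k (2 * n) t =
      ((Real.Gamma ((n : ℝ) + 1/2) * Real.Gamma k / Real.Gamma ((n : ℝ) + k + 1/2) : ℝ) : ℂ) := by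
  have hu : 0 < ((((n : ℝ) + 1/2 : ℝ)) : ℂ).re := by rw [Complex.ofReal_re]; positivity
  have hv : 0 < ((k : ℝ) : ℂ).re := by simpa using hk
  have hi := Complex.betaIntegral_convergent hu hv
  have hB := Complex.betaIntegral_eq_Gamma_mul_div _ _ hu hv
  rw [Complex.betaIntegral, intervalIntegral.integral_of_le zero_le_one,
    integral_Ioc_eq_integral_Ioo] at hB
  rw [intervalIntegrable_iff_integrableOn_Ioo_of_le zero_le_one] at hi
  rw [← dk_image] at hB hi
  have hd : ∀ x ∈ Ioo (0:ℝ) 1, HasDerivWithinAt (fun t : ℝ => t ^ 2) (2 * x) (Ioo 0 1) x := by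
    intro x _
    simpa using (hasDerivAt_pow 2 x).hasDerivWithinAt
  have hinj : InjOn (fun t : ℝ => t ^ 2) (Ioo 0 1) := by
    intro x hx y hy h
    simp only at h
    exact (pow_left_inj₀ hx.1.le hy.1.le two_ne_zero).1 h
  rw [integrableOn_image_iff_integrableOn_abs_deriv_smul measurableSet_Ioo hd hinj] at hi
  rw [integral_image_eq_integral_abs_deriv_smul measurableSet_Ioo hd hinj] at hB
  have hc : EqOn (fun x : ℝ => |2 * x| • ((((x ^ 2 : ℝ)) : ℂ) ^ ((((n : ℝ) + 1/2 : ℝ) : ℂ) - 1) *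
      (1 - ((x ^ 2 : ℝ) : ℂ)) ^ ((k : ℂ) - 1))) (fun x => 2 * dkh k (2 * n) x) (Ioo 0 1) := by
    rintro x ⟨h0, h1⟩
    have hx2 : 0 ≤ 1 - x ^ 2 := by nlinarith
    have e1 : (((x ^ 2 : ℝ)) : ℂ) ^ ((((n : ℝ) + 1/2 : ℝ) : ℂ) - 1)
        = (((x ^ 2 : ℝ) ^ ((n : ℝ) + 1/2 - 1) : ℝ) : ℂ) := by
      rw [Complex.ofReal_cpow (by positivity)]; push_cast; rfl
    have e2 : (1 - ((x ^ 2 : ℝ) : ℂ)) ^ ((k : ℂ) - 1) = (((1 - x ^ 2) ^ (k - 1) : ℝ) : ℂ) := by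
      rw [Complex.ofReal_cpow hx2]; push_cast; rfl
    have e3 : x * (x ^ 2 : ℝ) ^ ((n : ℝ) + 1/2 - 1) = x ^ (2 * n) := by
      rw [← Real.rpow_natCast x 2, ← Real.rpow_mul h0.le, mul_comm, ← Real.rpow_add_one h0.ne',
        ← Real.rpow_natCast]
      congr 1; push_cast; ring
    simp only [dkh]
    rw [e1, e2, abs_of_pos (by positivity), Complex.real_smul, ← e3]
    push_cast; ring
  have hi2 := hi.congr_fun hc measurableSet_Ioo
  rw [setIntegral_congr_fun measurableSet_Ioo hc, integral_const_mul] at hB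
  refine ⟨?_, ?_⟩
  · have := Integrable.const_mul hi2 (1/2 : ℂ)
    refine IntegrableOn.congr_fun this (fun x _ => ?_) measurableSet_Ioo
    simp
  · rw [hB, ← Complex.ofReal_add, Complex.Gamma_ofReal, Complex.Gamma_ofReal, Complex.Gamma_ofReal,
      show (n : ℝ) + 1/2 + k = n + k + 1/2 by ring]
    push_cast; rfl

lemma dkh_neg_even (k : ℝ) (n : ℕ) (t : ℝ) : dkh k (2 * n) (-t) = dkh k (2 * n) t := by
  simp [dkh, pow_mul]

lemma dkh_neg_odd (k : ℝ) (n : ℕ) (t : ℝ) : dkh k (2 * n + 1) (-t) = - dkh k (2 * n + 1) t := by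
  simp [dkh, pow_mul, pow_succ]

lemma dk_even (k : ℝ) (hk : 0 < k) (n : ℕ) :
    IntervalIntegrable (dkh k (2 * n)) volume (-1) 1 ∧
    ∫ t in (-1:ℝ)..1, dkh k (2 * n) t =
      ((Real.Gamma ((n : ℝ) + 1/2) * Real.Gamma k / Real.Gamma ((n : ℝ) + k + 1/2) : ℝ) : ℂ) := by
  obtain ⟨h1, h2⟩ := dk_half k hk n
  have hI : IntervalIntegrable (dkh k (2 * n)) volume 0 1 := by
    rwa [intervalIntegrable_iff_integrableOn_Ioo_of_le zero_le_one]
  have hJ : IntervalIntegrable (dkh k (2 * n)) volume (-1) 0 := by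
    rw [IntervalIntegrable.iff_comp_neg]
    simp only [dkh_neg_even, neg_neg, neg_zero]
    exact hI.symm
  refine ⟨hJ.trans hI, ?_⟩
  rw [← intervalIntegral.integral_add_adjacent_intervals hJ hI, ← h2]
  have : ∫ t in (-1:ℝ)..0, dkh k (2 * n) t = ∫ t in (0:ℝ)..1, dkh k (2 * n) t := by
    have := intervalIntegral.integral_comp_neg (a := 0) (b := 1) (dkh k (2 * n))
    simp only [dkh_neg_even, neg_zero] at this
    exact this.symm
  rw [this, intervalIntegral.integral_of_le zero_le_one, integral_Ioc_eq_integral_Ioo]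
  ring

lemma dk_odd (k : ℝ) (n : ℕ) :
    ∫ t in (-1:ℝ)..1, dkh k (2 * n + 1) t = 0 := by
  have := intervalIntegral.integral_comp_neg (a := -1) (b := 1) (dkh k (2 * n + 1))
  simp only [dkh_neg_odd, neg_neg, intervalIntegral.integral_neg] at this
  exact self_eq_neg.1 this.symm

lemma dk_int (k : ℝ) (hk : 0 < k) (m : ℕ) :
    IntervalIntegrable (dkh k m) volume (-1) 1 := by
  have h := (dk_even k hk 0).1
  have h2 := h.continuousOn_mul (g := fun t : ℝ => ((t : ℂ)) ^ m)
    (Continuous.continuousOn (by fun_prop))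
  refine h2.congr (fun t _ => ?_)
  simp [dkh]

lemma dk_series (k : ℝ) (hk : 0 < k) (u : ℂ) :
    HasSum (fun m : ℕ => u ^ m / (m.factorial : ℂ) *
        ((∫ t in (-1:ℝ)..1, dkh k m t) + ∫ t in (-1:ℝ)..1, dkh k (m + 1) t))
      (∫ t in Icc (-1 : ℝ) 1,
      Complex.exp ((t : ℂ) * u) * (((1 - t) ^ (k - 1) * (1 + t) ^ k : ℝ) : ℂ)) := by
  have e0 : (∫ t in Icc (-1 : ℝ) 1,
      Complex.exp ((t : ℂ) * u) * (((1 - t) ^ (k - 1) * (1 + t) ^ k : ℝ) : ℂ)) =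
      ∫ t in (-1:ℝ)..1, Complex.exp ((t : ℂ) * u) * (dkh k 0 t + dkh k 1 t) := by
    rw [intervalIntegral.integral_of_le (by norm_num), integral_Ioc_eq_integral_Ioo,
      integral_Icc_eq_integral_Ioo]
    refine setIntegral_congr_fun measurableSet_Ioo (fun t ht => ?_)
    have h1 : 0 < 1 - t := by linarith [ht.2]
    have h2 : 0 < 1 + t := by linarith [ht.1]
    have : (1 - t) ^ (k - 1) * (1 + t) ^ k
        = t ^ 0 * (1 - t ^ 2) ^ (k - 1) + t ^ 1 * (1 - t ^ 2) ^ (k - 1) := by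
      rw [show 1 - t ^ 2 = (1 - t) * (1 + t) by ring, Real.mul_rpow h1.le h2.le]
      have : (1 + t) ^ k = (1 + t) ^ (k - 1) * (1 + t) := by
        rw [← Real.rpow_add_one h2.ne']; simp
      rw [this]; ring
    simp only [dkh]
    rw [this, Complex.ofReal_add]
  rw [e0]
  have e1 : ∀ m : ℕ, u ^ m / (m.factorial : ℂ) *
        ((∫ t in (-1:ℝ)..1, dkh k m t) + ∫ t in (-1:ℝ)..1, dkh k (m + 1) t) =
      ∫ t in (-1:ℝ)..1, (((t : ℂ) * u) ^ m / (m.factorial : ℂ)) * (dkh k 0 t + dkh k 1 t) := by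
    intro m
    rw [← intervalIntegral.integral_add (dk_int k hk m) (dk_int k hk (m+1)),
      ← intervalIntegral.integral_const_mul]
    congr 1
    ext t
    simp only [dkh]
    push_cast
    ring
  simp only [e1]
  have hw : IntervalIntegrable (fun t => dkh k 0 t + dkh k 1 t) volume (-1) 1 :=
    (dk_int k hk 0).add (dk_int k hk 1)
  have hs : Summable fun m : ℕ => ‖u‖ ^ m / (m.factorial : ℝ) := Real.summable_pow_div_factorial _
  refine intervalIntegral.hasSum_integral_of_dominated_convergence
    (fun m t => ‖u‖ ^ m / (m.factorial : ℝ) * ‖dkh k 0 t + dkh k 1 t‖) ?_ ?_ ?_ ?_ ?_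
  · intro m
    refine AEStronglyMeasurable.mul (Continuous.aestronglyMeasurable (by fun_prop)) ?_
    exact (intervalIntegrable_iff.1 hw).aestronglyMeasurable
  · intro m
    refine ae_of_all _ (fun t ht => ?_)
    rw [uIoc_of_le (by norm_num)] at ht
    rw [norm_mul, norm_div, norm_pow, norm_mul, Complex.norm_natCast, Complex.norm_real]
    have : ‖t‖ ≤ 1 := by rw [Real.norm_eq_abs, abs_le]; exact ⟨ht.1.le, ht.2⟩
    gcongr
    calc ‖t‖ * ‖u‖ ≤ 1 * ‖u‖ := by gcongr
      _ = ‖u‖ := one_mul _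
  · exact ae_of_all _ (fun t _ => hs.mul_right _)
  · simp only [tsum_mul_right]
    exact hw.norm.const_mul _
  · refine ae_of_all _ (fun t _ => ?_)
    refine HasSum.mul_right _ ?_
    rw [Complex.exp_eq_exp_ℂ]
    exact NormedSpace.expSeries_div_hasSum_exp _

lemma dk_even_term (k : ℝ) (hk : 0 < k) (u : ℂ) (n : ℕ) :
    u ^ (2 * n) / ((2 * n).factorial : ℂ) *
        ((∫ t in (-1:ℝ)..1, dkh k (2 * n) t) + ∫ t in (-1:ℝ)..1, dkh k (2 * n + 1) t) =
      ((Real.Gamma (1/2) * Real.Gamma k : ℝ) : ℂ) * ((u / 2) ^ (2 * n) /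
            ((n.factorial : ℂ) * ((Real.Gamma ((n : ℝ) + k + 1/2) : ℝ) : ℂ))) := by
  rw [(dk_even k hk n).2, dk_odd]
  have hg : ((Real.Gamma ((n : ℝ) + k + 1/2) : ℝ) : ℂ) ≠ 0 := by
    exact_mod_cast (Real.Gamma_pos_of_pos (by positivity)).ne'
  have hf : (n.factorial : ℂ) ≠ 0 := by exact_mod_cast n.factorial_ne_zero
  have hf2 : ((2 * n).factorial : ℂ) ≠ 0 := by exact_mod_cast (2 * n).factorial_ne_zero
  have h := congrArg (fun x : ℝ => (x : ℂ)) (dk_gamma_half n)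
  simp only [Complex.ofReal_mul, Complex.ofReal_pow, Complex.ofReal_natCast,
    Complex.ofReal_ofNat] at h
  rw [div_pow, pow_mul 2 2 n, show (2:ℂ) ^ 2 = 4 by norm_num, Complex.ofReal_div,
    Complex.ofReal_mul, Complex.ofReal_mul]
  generalize ((Real.Gamma ((n : ℝ) + k + 1/2) : ℝ) : ℂ) = a at *
  generalize ((Real.Gamma ((n : ℝ) + 1/2) : ℝ) : ℂ) = b at *
  generalize ((Real.Gamma (1/2) : ℝ) : ℂ) = c at *
  generalize ((Real.Gamma k : ℝ) : ℂ) = d at *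
  generalize u ^ (2 * n) = v at *
  field_simp
  linear_combination v * d * h

lemma dk_odd_term (k : ℝ) (hk : 0 < k) (u : ℂ) (n : ℕ) :
    u ^ (2 * n + 1) / ((2 * n + 1).factorial : ℂ) *
        ((∫ t in (-1:ℝ)..1, dkh k (2 * n + 1) t) + ∫ t in (-1:ℝ)..1, dkh k (2 * n + 1 + 1) t) =
      ((Real.Gamma (1/2) * Real.Gamma k : ℝ) : ℂ) * (u / 2) * ((u / 2) ^ (2 * n) /
            ((n.factorial : ℂ) * ((Real.Gamma ((n : ℝ) + k + 3/2) : ℝ) : ℂ))) := by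
  rw [show 2 * n + 1 + 1 = 2 * (n + 1) by ring, (dk_even k hk (n + 1)).2, dk_odd]
  have hg : ((Real.Gamma ((n : ℝ) + k + 3/2) : ℝ) : ℂ) ≠ 0 := by
    exact_mod_cast (Real.Gamma_pos_of_pos (by positivity)).ne'
  have hf : (n.factorial : ℂ) ≠ 0 := by exact_mod_cast n.factorial_ne_zero
  have hf2 : ((2 * n).factorial : ℂ) ≠ 0 := by exact_mod_cast (2 * n).factorial_ne_zero
  have hf3 : (2 * n + 1 : ℂ) ≠ 0 := by exact_mod_cast (2 * n).succ_ne_zero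
  have h := congrArg (fun x : ℝ => (x : ℂ)) (dk_gamma_half n)
  simp only [Complex.ofReal_mul, Complex.ofReal_pow, Complex.ofReal_natCast,
    Complex.ofReal_ofNat] at h
  rw [show ((n + 1 : ℕ) : ℝ) + k + 1/2 = n + k + 3/2 by push_cast; ring,
    show ((n + 1 : ℕ) : ℝ) + 1/2 = ((n : ℝ) + 1/2) + 1 by push_cast; ring,
    Real.Gamma_add_one (by positivity), Nat.factorial_succ,
    div_pow, pow_mul 2 2 n, show (2:ℂ) ^ 2 = 4 by norm_num, Complex.ofReal_div,
    Complex.ofReal_mul, Complex.ofReal_mul, Complex.ofReal_mul, pow_succ u (2 * n)]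
  rw [show (((n : ℝ) + 1/2 : ℝ) : ℂ) = (2 * n + 1) / 2 by push_cast; ring, Nat.cast_mul,
    show ((2 * n + 1 : ℕ) : ℂ) = 2 * n + 1 by push_cast; ring]
  generalize ((Real.Gamma ((n : ℝ) + k + 3/2) : ℝ) : ℂ) = a at *
  generalize ((Real.Gamma ((n : ℝ) + 1/2) : ℝ) : ℂ) = b at *
  generalize ((Real.Gamma (1/2) : ℝ) : ℂ) = c at *
  generalize ((Real.Gamma k : ℝ) : ℂ) = d at *
  generalize u ^ (2 * n) = v at *
  field_simp
  linear_combination v * u * d * (2 * n + 1) * h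

lemma dk_summable (k : ℝ) (hk : 0 < k) (u : ℂ) :
    Summable (fun n : ℕ =>
      (u / 2) ^ (2 * n) / ((n.factorial : ℂ) * ((Real.Gamma ((n : ℝ) + k + 1/2) : ℝ) : ℂ))) := by
  have h := (dk_series k hk u).summable.comp_injective
    (i := fun n : ℕ => 2 * n) (mul_right_injective₀ two_ne_zero)
  have hc : ((Real.Gamma (1/2) * Real.Gamma k : ℝ) : ℂ) ≠ 0 := by
    exact_mod_cast (mul_pos (Real.Gamma_pos_of_pos (by norm_num)) (Real.Gamma_pos_of_pos hk)).ne'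
  rw [← summable_mul_left_iff hc]
  refine h.congr (fun n => ?_)
  exact dk_even_term k hk u n

/-- The Bessel-series expansion of the rank-one Dunkl kernel:
`D_k(u) = j_{k-1/2}(iu) + (u/(2k+1)) j_{k+1/2}(iu)`, written out as two absolutely
convergent power series. -/
theorem dunkl_stmt8 (k : ℝ) (hk : 0 < k) (u : ℂ) :
    Summable (fun n : ℕ =>
      ‖(u / 2) ^ (2 * n) / ((n.factorial : ℂ) * ((Real.Gamma ((n : ℝ) + k + 1/2) : ℝ) : ℂ))‖) ∧
    Summable (fun n : ℕ =>
      ‖(u / 2) ^ (2 * n) / ((n.factorial : ℂ) * ((Real.Gamma ((n : ℝ) + k + 3/2) : ℝ) : ℂ))‖) ∧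
    Dk k u =
      ((Real.Gamma (k + 1/2) : ℝ) : ℂ) *
          ∑' n : ℕ, (u / 2) ^ (2 * n) /
            ((n.factorial : ℂ) * ((Real.Gamma ((n : ℝ) + k + 1/2) : ℝ) : ℂ))
        + (u / (2 * (k : ℂ) + 1)) * ((Real.Gamma (k + 3/2) : ℝ) : ℂ) *
          ∑' n : ℕ, (u / 2) ^ (2 * n) /
            ((n.factorial : ℂ) * ((Real.Gamma ((n : ℝ) + k + 3/2) : ℝ) : ℂ)) := by
  have s1 := dk_summable k hk u
  have s2 := dk_summable (k + 1) (by linarith) u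
  have e : ∀ n : ℕ, (n : ℝ) + (k + 1) + 1/2 = n + k + 3/2 := fun n => by ring
  simp only [e] at s2
  refine ⟨s1.norm, s2.norm, ?_⟩
  have hE := s1.hasSum.mul_left ((Real.Gamma (1/2) * Real.Gamma k : ℝ) : ℂ)
  have hO := s2.hasSum.mul_left (((Real.Gamma (1/2) * Real.Gamma k : ℝ) : ℂ) * (u / 2))
  simp only [← dk_even_term k hk u] at hE
  simp only [← dk_odd_term k hk u] at hO
  have hT := (dk_series k hk u).unique (HasSum.even_add_odd hE hO)
  rw [Dk, hT]
  have h1 : ((Real.Gamma (1/2) : ℝ) : ℂ) ≠ 0 := by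
    exact_mod_cast (Real.Gamma_pos_of_pos (by norm_num)).ne'
  have h2 : ((Real.Gamma k : ℝ) : ℂ) ≠ 0 := by
    exact_mod_cast (Real.Gamma_pos_of_pos hk).ne'
  have h3 : (2 * (k : ℂ) + 1) ≠ 0 := by
    exact_mod_cast (by positivity : (2 * k + 1 : ℝ) ≠ 0)
  rw [show k + 3/2 = (k + 1/2) + 1 by ring, Real.Gamma_add_one (by positivity),
    Complex.ofReal_div, Complex.ofReal_mul, Complex.ofReal_mul,
    show ((k + 1/2 : ℝ) : ℂ) = (2 * k + 1) / 2 by push_cast; ring]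
  generalize ((Real.Gamma (1/2) : ℝ) : ℂ) = a at *
  generalize ((Real.Gamma k : ℝ) : ℂ) = b at *
  field_simp
end

section
/- Let k > 0 be real. Then lim_{s→+∞} s^k e^{−is} D_k(is) = e^{−iπk/2} Γ(2k+1)/(2^k Γ(k+1)), and lim_{s→+∞} s^k e^{is} D_k(−is) = e^{iπk/2} Γ(2k+1)/(2^k Γ(k+1)), where s ranges over positive reals. -/
open MeasureTheory Filter Set

lemma watson (a : ℝ) (ha : 0 < a) (g : ℝ → ℂ) (hg : Continuous g) :
    Tendsto (fun s : ℝ => ((s ^ (a+1) : ℝ) : ℂ) *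
      ∫ y in (0:ℝ)..1, ((Real.exp (-(s * y)) * y ^ a : ℝ) : ℂ) * g y) atTop
      (nhds (((Real.Gamma (a+1) : ℝ) : ℂ) * g 0)) := by
  obtain ⟨C, hC⟩ := (isCompact_Icc (a := (0:ℝ)) (b := 1)).exists_bound_of_continuousOn hg.continuousOn
  have hGint : IntegrableOn (fun u : ℝ => Real.exp (-u) * u ^ a) (Ioi 0) := by
    have := Real.GammaIntegral_convergent (s := a + 1) (by linarith)
    simpa using this
  have key : Tendsto (fun s : ℝ => ∫ u in Ioi (0:ℝ),
      (Ioc 0 s).indicator (fun u => ((Real.exp (-u) * u ^ a : ℝ) : ℂ) * g (u / s)) u) atTop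
      (nhds (∫ u in Ioi (0:ℝ), ((Real.exp (-u) * u ^ a : ℝ) : ℂ) * g 0)) := by
    apply tendsto_integral_filter_of_dominated_convergence
      (fun u => (Real.exp (-u) * u ^ a) * C)
    · filter_upwards with s
      apply AEStronglyMeasurable.indicator _ measurableSet_Ioc
      apply Continuous.aestronglyMeasurable
      have : Continuous fun u : ℝ => u ^ a := Real.continuous_rpow_const ha.le
      fun_prop
    · filter_upwards [eventually_gt_atTop 0] with s hs
      filter_upwards [ae_restrict_mem measurableSet_Ioi] with u hu
      have hu' : 0 < u := hu
      have hC0 : 0 ≤ C := (norm_nonneg _).trans (hC 0 (by simp))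
      by_cases h : u ∈ Ioc 0 s
      · rw [indicator_of_mem h, norm_mul, Complex.norm_real, Real.norm_of_nonneg (by positivity)]
        gcongr
        apply hC
        exact ⟨by positivity, (div_le_one hs).2 h.2⟩
      · rw [indicator_of_notMem h]
        simp only [norm_zero]; positivity
    · exact hGint.mul_const C
    · filter_upwards [ae_restrict_mem measurableSet_Ioi] with u hu
      have hu' : 0 < u := hu
      have h1 : Tendsto (fun s : ℝ => ((Real.exp (-u) * u ^ a : ℝ) : ℂ) * g (u / s)) atTop
          (nhds (((Real.exp (-u) * u ^ a : ℝ) : ℂ) * g 0)) := by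
        apply Tendsto.const_mul
        exact (hg.tendsto 0).comp (tendsto_const_nhds.div_atTop tendsto_id)
      refine h1.congr' ?_
      filter_upwards [eventually_ge_atTop u] with s hs
      rw [indicator_of_mem]
      exact ⟨hu', hs⟩
  have hlim : (∫ u in Ioi (0:ℝ), ((Real.exp (-u) * u ^ a : ℝ) : ℂ) * g 0)
      = ((Real.Gamma (a+1) : ℝ) : ℂ) * g 0 := by
    rw [integral_mul_const, integral_complex_ofReal, Real.Gamma_eq_integral (by linarith)]
    simp
  rw [hlim] at key
  refine key.congr' ?_
  filter_upwards [eventually_gt_atTop 0] with s hs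
  rw [setIntegral_indicator measurableSet_Ioc, inter_eq_right.2 Ioc_subset_Ioi_self,
    ← intervalIntegral.integral_of_le hs.le]
  have := intervalIntegral.integral_comp_mul_left (a := 0) (b := 1)
    (fun u => ((Real.exp (-u) * u ^ a : ℝ) : ℂ) * g (u / s)) hs.ne'
  simp only [mul_zero, mul_one] at this
  have e2 : (∫ u in (0:ℝ)..s, ((Real.exp (-u) * u ^ a : ℝ) : ℂ) * g (u / s)) =
    (s:ℂ) * ∫ x in (0:ℝ)..1, ((Real.exp (-(s*x)) * (s*x) ^ a : ℝ) : ℂ) * g (s * x / s) := by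
    rw [this, Complex.real_smul, ← mul_assoc]
    simp [hs.ne']
  rw [e2, ← intervalIntegral.integral_const_mul, ← intervalIntegral.integral_const_mul]
  apply intervalIntegral.integral_congr
  intro x hx
  rw [uIcc_of_le zero_le_one] at hx
  simp only
  rw [mul_div_cancel_left₀ _ hs.ne', Real.mul_rpow hs.le hx.1, Real.rpow_add hs, Real.rpow_one]
  push_cast
  ring

noncomputable def BB (a b s : ℝ) : ℂ :=
  ∫ x in (0:ℝ)..2, Complex.exp (Complex.I * s * x) * ((x ^ a * (2 - x) ^ b : ℝ) : ℂ)

noncomputable def TT (a b s : ℝ) : ℂ :=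
  ∫ x in (0:ℝ)..2, Complex.exp (Complex.I * s * (x + Complex.I)) *
    ((x + Complex.I : ℂ) ^ (a : ℂ) * (2 - (x + Complex.I)) ^ (b : ℂ))

noncomputable def VV (a b s c : ℝ) : ℂ :=
  ∫ y in (0:ℝ)..1, ((Real.exp (-(s * y)) * y ^ a : ℝ) : ℂ) * (2 - c * Complex.I * y) ^ (b : ℂ)

lemma cpow_aux (x : ℝ) (hx : 0 ≤ x) (a : ℝ) (w : ℂ) (ha : 0 < a) :
    ((x : ℂ) * w) ^ (a : ℂ) = ((x ^ a : ℝ) : ℂ) * w ^ (a : ℂ) := by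
  have ha' : (a:ℂ) ≠ 0 := by exact_mod_cast ha.ne'
  rcases hx.eq_or_lt with rfl | hx
  · simp [ha', ha.ne']
  · rcases eq_or_ne w 0 with rfl | hw
    · simp [ha']
    · have hx' : (x:ℂ) ≠ 0 := by exact_mod_cast hx.ne'
      rw [Complex.ofReal_cpow hx.le, Complex.cpow_def_of_ne_zero (mul_ne_zero hx' hw),
        Complex.cpow_def_of_ne_zero hx', Complex.cpow_def_of_ne_zero hw,
        Complex.log_ofReal_mul hx hw, ← Complex.exp_add, Complex.ofReal_log hx.le]
      ring_nf

lemma contour (a b s : ℝ) (ha : 0 < a) (hb : 0 < b) :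
    BB a b s = TT a b s + Complex.I * Complex.I ^ (a : ℂ) * VV a b s 1
      - Complex.I * (Complex.exp (2 * Complex.I * s) * (-Complex.I) ^ (b : ℂ)) * VV b a s (-1) := by
  have h := Complex.integral_boundary_rect_eq_zero_of_continuousOn_of_differentiableOn
    (fun z : ℂ => Complex.exp (Complex.I * s * z) * (z ^ (a : ℂ) * (2 - z) ^ (b : ℂ)))
    0 (2 + Complex.I) ?_ ?_
  · simp only [Complex.zero_re, Complex.zero_im, Complex.add_re, Complex.add_im, Complex.re_ofNat,
      Complex.im_ofNat, Complex.I_re, Complex.I_im, add_zero, zero_add, Complex.ofReal_zero,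
      zero_mul, Complex.ofReal_one, one_mul, smul_eq_mul, Complex.ofReal_ofNat] at h
    have h1 : (∫ x in (0:ℝ)..2, Complex.exp (Complex.I * s * x) * ((x:ℂ) ^ (a : ℂ) * (2 - (x:ℂ)) ^ (b : ℂ)))
        = BB a b s := by
      apply intervalIntegral.integral_congr
      intro x hx
      rw [uIcc_of_le zero_le_two] at hx
      simp only
      rw [Complex.ofReal_mul, Complex.ofReal_cpow hx.1, Complex.ofReal_cpow (by linarith [hx.2])]
      push_cast
      rfl
    have hexp : ∀ y : ℝ, Complex.exp (Complex.I * s * (y * Complex.I)) = ((Real.exp (-(s*y)) : ℝ) : ℂ) := by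
      intro y
      push_cast
      congr 1
      linear_combination (s*y:ℂ) * Complex.I_sq
    have h2 : (∫ y in (0:ℝ)..1, Complex.exp (Complex.I * s * (y * Complex.I)) *
        ((y * Complex.I) ^ (a : ℂ) * (2 - (y * Complex.I)) ^ (b : ℂ)))
        = Complex.I ^ (a : ℂ) * VV a b s 1 := by
      rw [VV, ← intervalIntegral.integral_const_mul]
      apply intervalIntegral.integral_congr
      intro x hx
      rw [uIcc_of_le zero_le_one] at hx
      simp only
      rw [hexp, cpow_aux x hx.1 a Complex.I ha]
      push_cast
      ring_nf
    have h3 : (∫ y in (0:ℝ)..1, Complex.exp (Complex.I * s * (2 + y * Complex.I)) *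
        ((2 + y * Complex.I) ^ (a : ℂ) * (2 - (2 + y * Complex.I)) ^ (b : ℂ)))
        = Complex.exp (2 * Complex.I * s) * (-Complex.I) ^ (b : ℂ) * VV b a s (-1) := by
      rw [VV, ← intervalIntegral.integral_const_mul]
      apply intervalIntegral.integral_congr
      intro x hx
      rw [uIcc_of_le zero_le_one] at hx
      simp only
      have e1 : (2 - (2 + (x:ℂ) * Complex.I)) = x * (-Complex.I) := by ring
      have e2 : Complex.I * s * (2 + x * Complex.I) = 2 * Complex.I * s + Complex.I * s * (x * Complex.I) := by ring
      rw [e1, e2, Complex.exp_add, hexp, cpow_aux x hx.1 b (-Complex.I) hb]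
      push_cast
      ring_nf
    rw [h1, h2, h3] at h
    rw [TT]
    linear_combination h
  · intro z hz
    rw [Complex.mem_reProdIm] at hz
    simp [uIcc_of_le] at hz
    apply ContinuousAt.continuousWithinAt
    apply ContinuousAt.mul (by fun_prop)
    apply ContinuousAt.mul
    · exact Complex.continuousAt_cpow_const_of_re_pos (Or.inl hz.1.1) (by simpa)
    · have := Complex.continuousAt_cpow_const_of_re_pos (z := 2 - z) (w := b) (Or.inl (by simpa using hz.1.2)) (by simpa)
      exact ContinuousAt.comp (f := fun z : ℂ => 2 - z) this (by fun_prop)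
  · intro z hz
    rw [Complex.mem_reProdIm] at hz
    simp at hz
    apply DifferentiableAt.differentiableWithinAt
    have m1 : z ∈ Complex.slitPlane := Or.inl hz.1.1
    have m2 : 2 - z ∈ Complex.slitPlane := Or.inl (by simpa using hz.1.2)
    apply DifferentiableAt.mul (by fun_prop)
    apply DifferentiableAt.mul
    · exact DifferentiableAt.cpow_const (by fun_prop) m1
    · exact DifferentiableAt.cpow_const (by fun_prop) m2
lemma VV_tendsto (a b c : ℝ) (ha : 0 < a) (hb : 0 < b) :
    Tendsto (fun s : ℝ => ((s ^ (a+1) : ℝ) : ℂ) * VV a b s c) atTop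
      (nhds (((Real.Gamma (a+1) * 2 ^ b : ℝ) : ℂ))) := by
  have h := watson a ha (fun y : ℝ => (2 - c * Complex.I * y) ^ (b : ℂ)) (by
    rw [continuous_iff_continuousAt]
    intro y
    have := Complex.continuousAt_cpow_const_of_re_pos (z := 2 - c * Complex.I * y) (w := b)
      (Or.inl (by simp)) (by simpa)
    exact ContinuousAt.comp (f := fun y : ℝ => (2 - c * Complex.I * y : ℂ)) this (by fun_prop))
  have e : ((Real.Gamma (a+1) * 2 ^ b : ℝ) : ℂ) =
      ((Real.Gamma (a+1) : ℝ) : ℂ) * (2 - c * Complex.I * (0:ℝ)) ^ (b : ℂ) := by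
    rw [Complex.ofReal_mul, Complex.ofReal_cpow (by norm_num)]
    simp
  rw [e]
  exact h

lemma VV_small (a b c p : ℝ) (ha : 0 < a) (hb : 0 < b) (hp : p < a + 1) :
    Tendsto (fun s : ℝ => ((s ^ p : ℝ) : ℂ) * VV a b s c) atTop (nhds 0) := by
  have h1 : Tendsto (fun s : ℝ => ((s ^ (-(a + 1 - p)) : ℝ) : ℂ)) atTop (nhds ((0:ℝ):ℂ)) :=
    (Complex.continuous_ofReal.tendsto 0).comp (tendsto_rpow_neg_atTop (by linarith))
  have h := h1.mul (VV_tendsto a b c ha hb)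
  rw [Complex.ofReal_zero, zero_mul] at h
  refine h.congr' ?_
  filter_upwards [eventually_gt_atTop 0] with s hs
  rw [← mul_assoc, ← Complex.ofReal_mul, ← Real.rpow_add hs]
  congr 3
  ring_nf

lemma TT_small (a b p : ℝ) (ha : 0 < a) (hb : 0 < b) :
    Tendsto (fun s : ℝ => ((s ^ p : ℝ) : ℂ) * TT a b s) atTop (nhds 0) := by
  have hf : ∀ s : ℝ, TT a b s = ((Real.exp (-s) : ℝ) : ℂ) * ∫ x in (0:ℝ)..2,
      Complex.exp (Complex.I * s * x) *
    ((x + Complex.I : ℂ) ^ (a : ℂ) * (2 - (x + Complex.I)) ^ (b : ℂ)) := by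
    intro s
    rw [TT, ← intervalIntegral.integral_const_mul]
    congr 1
    ext x
    rw [← mul_assoc (Complex.ofReal _) (Complex.exp _)]
    congr 1
    rw [Complex.ofReal_exp, ← Complex.exp_add]
    congr 1
    push_cast
    linear_combination (s:ℂ) * Complex.I_sq
  have hc : ContinuousOn (fun x : ℝ => ((x + Complex.I : ℂ) ^ (a : ℂ) * (2 - (x + Complex.I)) ^ (b : ℂ))) (Icc 0 2) := by
    intro x hx
    apply ContinuousAt.continuousWithinAt
    apply ContinuousAt.mul
    · have := Complex.continuousAt_cpow_const_of_re_pos (z := x + Complex.I) (w := a)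
        (Or.inl (by simpa using hx.1)) (by simpa)
      exact ContinuousAt.comp (f := fun y : ℝ => (y + Complex.I : ℂ)) this (by fun_prop)
    · have := Complex.continuousAt_cpow_const_of_re_pos (z := 2 - (x + Complex.I)) (w := b)
        (Or.inl (by simpa using hx.2)) (by simpa)
      exact ContinuousAt.comp (f := fun y : ℝ => (2 - (y + Complex.I) : ℂ)) this (by fun_prop)
  obtain ⟨C, hC⟩ := isCompact_Icc.exists_bound_of_continuousOn hc
  have h0 : Tendsto (fun s : ℝ => s ^ p * Real.exp (-s) * (C * 2)) atTop (nhds 0) := by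
    have := (tendsto_rpow_mul_exp_neg_mul_atTop_nhds_zero p 1 one_pos).mul_const (C * 2)
    simpa using this
  apply squeeze_zero_norm' _ h0
  filter_upwards [eventually_gt_atTop 0] with s hs
  rw [hf, ← mul_assoc, norm_mul, ← Complex.ofReal_mul, Complex.norm_real,
    Real.norm_of_nonneg (by positivity)]
  gcongr
  refine (intervalIntegral.norm_integral_le_of_norm_le_const (C := C) ?_).trans (by simp)
  intro x hx
  rw [uIoc_of_le zero_le_two] at hx
  rw [norm_mul]
  have : ‖Complex.exp (Complex.I * s * x)‖ = 1 := by
    rw [Complex.norm_exp]; simp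
  rw [this, one_mul]
  exact hC x ⟨hx.1.le, hx.2⟩

lemma BB_rest (a b p : ℝ) (ha : 0 < a) (hb : 0 < b) (hp : p < b + 1) :
    Tendsto (fun s : ℝ => ((s ^ p : ℝ) : ℂ) * BB a b s -
      Complex.I * Complex.I ^ (a : ℂ) * (((s ^ p : ℝ) : ℂ) * VV a b s 1)) atTop (nhds 0) := by
  have h2 : Tendsto (fun s : ℝ => (Complex.I * (Complex.exp (2 * Complex.I * s) * (-Complex.I) ^ (b : ℂ)))
      * (((s ^ p : ℝ) : ℂ) * VV b a s (-1))) atTop (nhds 0) := by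
    rw [tendsto_zero_iff_norm_tendsto_zero]
    have h := ((tendsto_zero_iff_norm_tendsto_zero.1 (VV_small b a (-1) p hb ha hp))).const_mul
      ‖(-Complex.I) ^ (b : ℂ)‖
    rw [mul_zero] at h
    refine h.congr ?_
    intro s
    have : ‖Complex.exp (2 * Complex.I * s)‖ = 1 := by
      rw [Complex.norm_exp]; simp
    rw [norm_mul (Complex.I * _), norm_mul Complex.I, norm_mul (Complex.exp _), this]
    simp
  have h := (TT_small a b p ha hb).sub h2
  rw [sub_zero] at h
  refine h.congr ?_
  intro s
  rw [contour a b s ha hb]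
  ring

lemma parts (k s : ℝ) (hk : 0 < k) :
    2 * k * BB (k-1) k s = -(Complex.I * s) * BB k (k+1) s + (2 * k + 1) * BB k k s := by
  have cts : ∀ a b : ℝ, 0 < a → 0 < b → Continuous (fun x : ℝ =>
      Complex.exp (Complex.I * s * x) * ((x ^ a * (2 - x) ^ b : ℝ) : ℂ)) := by
    intro a b ha hb
    have h1 : Continuous fun u : ℝ => u ^ a := Real.continuous_rpow_const ha.le
    have h2 : Continuous fun u : ℝ => (2 - u) ^ b :=
      (Real.continuous_rpow_const hb.le).comp (continuous_const.sub continuous_id)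
    fun_prop
  have i1 : IntervalIntegrable (fun x : ℝ =>
      Complex.exp (Complex.I * s * x) * ((x ^ (k-1) * (2 - x) ^ k : ℝ) : ℂ)) volume 0 2 := by
    have h0 : IntervalIntegrable (fun x : ℝ => ((x ^ (k-1) : ℝ) : ℂ)) volume 0 2 :=
      have h := intervalIntegral.intervalIntegrable_rpow' (a := 0) (b := 2) (r := k - 1) (by linarith)
      ⟨h.1.ofReal, h.2.ofReal⟩
    have h2 : Continuous fun u : ℝ => (2 - u) ^ k :=
      (Real.continuous_rpow_const hk.le).comp (continuous_const.sub continuous_id)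
    have := h0.mul_continuousOn (g := fun x : ℝ => Complex.exp (Complex.I * s * x) * (((2 - x) ^ k : ℝ) : ℂ))
      (by fun_prop)
    convert this using 2
    push_cast
    ring
  have i2 := (cts k (k+1) hk (by linarith)).intervalIntegrable (μ := volume) 0 2
  have i3 := (cts k k hk hk).intervalIntegrable (μ := volume) 0 2
  have key := intervalIntegral.integral_eq_sub_of_hasDerivAt_of_le (a := 0) (b := 2) zero_le_two
    (f := fun x : ℝ => Complex.exp (Complex.I * s * x) * ((x ^ k * (2 - x) ^ (k+1) : ℝ) : ℂ))
    (f' := fun x : ℝ => (Complex.I * s) * (Complex.exp (Complex.I * s * x) * ((x ^ k * (2 - x) ^ (k+1) : ℝ) : ℂ))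
      + (2 * k) * (Complex.exp (Complex.I * s * x) * ((x ^ (k-1) * (2 - x) ^ k : ℝ) : ℂ))
      - (2 * k + 1) * (Complex.exp (Complex.I * s * x) * ((x ^ k * (2 - x) ^ k : ℝ) : ℂ)))
    (cts k (k+1) hk (by linarith)).continuousOn ?_
    (((i2.const_mul _).add (i1.const_mul _)).sub (i3.const_mul _))
  · rw [intervalIntegral.integral_sub ((i2.const_mul _).add (i1.const_mul _)) (i3.const_mul _),
      intervalIntegral.integral_add (i2.const_mul _) (i1.const_mul _),
      intervalIntegral.integral_const_mul, intervalIntegral.integral_const_mul,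
      intervalIntegral.integral_const_mul, sub_self, Real.zero_rpow hk.ne',
      Real.zero_rpow (by linarith)] at key
    simp only [zero_mul, mul_zero, Complex.ofReal_zero, sub_self] at key
    unfold BB
    linear_combination key
  · intro x hx
    have hx0 : 0 < x := hx.1
    have hx2 : 0 < 2 - x := by linarith [hx.2]
    have d1 : HasDerivAt (fun x : ℝ => Complex.exp (Complex.I * s * x))
        (Complex.exp (Complex.I * s * x) * (Complex.I * s)) x := by
      have : HasDerivAt (fun x : ℝ => Complex.I * s * (x:ℂ)) (Complex.I * s * 1) x :=
        (Complex.ofRealCLM.hasDerivAt (x := x)).const_mul _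
      simpa using this.cexp
    have d2 : HasDerivAt (fun x : ℝ => x ^ k * (2 - x) ^ (k+1))
        (k * x ^ (k-1) * (2 - x) ^ (k+1) + x ^ k * (-(k+1) * (2-x)^k)) x := by
      have e1 := Real.hasDerivAt_rpow_const (x := x) (p := k) (Or.inl hx0.ne')
      have e2 := ((hasDerivAt_id x).const_sub 2).rpow_const (p := k+1) (Or.inl hx2.ne')
      refine (e1.mul e2).congr_deriv ?_
      simp
    have d3 := d1.mul d2.ofReal_comp
    refine HasDerivAt.congr_deriv (f := fun x : ℝ =>
      Complex.exp (Complex.I * s * x) * ((x ^ k * (2 - x) ^ (k+1) : ℝ) : ℂ)) d3 ?_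
    have r1 : (2 - x) ^ (k+1) = (2 - x) ^ k * (2 - x) := by rw [Real.rpow_add hx2, Real.rpow_one]
    have r2 : x ^ k = x ^ (k-1) * x := by
      rw [← Real.rpow_add_one hx0.ne']; congr 1; ring
    rw [r1, r2]
    push_cast
    ring

lemma BB_main (k : ℝ) (hk : 0 < k) :
    Tendsto (fun s : ℝ => ((s ^ k : ℝ) : ℂ) * BB (k-1) k s) atTop
      (nhds (Complex.I ^ (k : ℂ) * ((Real.Gamma k * 2 ^ k : ℝ) : ℂ))) := by
  have A1 : Tendsto (fun s : ℝ => ((s ^ (k+1) : ℝ) : ℂ) * BB k (k+1) s) atTop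
      (nhds (Complex.I * Complex.I ^ (k : ℂ) * ((Real.Gamma (k+1) * 2 ^ (k+1) : ℝ) : ℂ))) := by
    have := (BB_rest k (k+1) (k+1) hk (by linarith) (by linarith)).add
      ((VV_tendsto k (k+1) 1 hk (by linarith)).const_mul (Complex.I * Complex.I ^ (k : ℂ)))
    simpa only [sub_add_cancel, zero_add] using this
  have A2 : Tendsto (fun s : ℝ => ((s ^ k : ℝ) : ℂ) * BB k k s) atTop (nhds 0) := by
    have := (BB_rest k k k hk hk (by linarith)).add
      ((VV_small k k 1 k hk hk (by linarith)).const_mul (Complex.I * Complex.I ^ (k : ℂ)))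
    simpa only [sub_add_cancel, zero_add, mul_zero] using this
  have hk' : (k:ℂ) ≠ 0 := by exact_mod_cast hk.ne'
  have h := ((A1.const_mul (-Complex.I)).add (A2.const_mul (2 * k + 1 : ℂ))).const_mul ((2 * k : ℂ)⁻¹)
  have hl : (2 * k : ℂ)⁻¹ * (-Complex.I * (Complex.I * Complex.I ^ (k : ℂ) * ((Real.Gamma (k+1) * 2 ^ (k+1) : ℝ) : ℂ)) + (2 * k + 1 : ℂ) * 0) = Complex.I ^ (k : ℂ) * ((Real.Gamma k * 2 ^ k : ℝ) : ℂ) := by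
    rw [Real.Gamma_add_one hk.ne', Real.rpow_add two_pos, Real.rpow_one]
    push_cast
    field_simp
    rw [Complex.I_sq]
    ring
  rw [hl] at h
  refine h.congr' ?_
  filter_upwards [eventually_gt_atTop 0] with s hs
  have hp := parts k s hk
  rw [Real.rpow_add hs, Real.rpow_one, inv_mul_eq_iff_eq_mul₀ (by simpa using hk')]
  push_cast
  linear_combination -((s ^ k : ℝ) : ℂ) * hp

lemma Dk_eq (k s : ℝ) : Complex.exp (Complex.I * s) * Dk k (-(Complex.I * s)) =
    ((Real.Gamma (k + 1/2) / (Real.Gamma (1/2) * Real.Gamma k) : ℝ) : ℂ) * BB (k-1) k s := by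
  have h := intervalIntegral.integral_comp_sub_left (a := 0) (b := 2) (fun t : ℝ =>
    Complex.exp ((t : ℂ) * (-(Complex.I * s))) * (((1 - t) ^ (k - 1) * (1 + t) ^ k : ℝ) : ℂ)) 1
  simp only [sub_zero, show (1:ℝ) - 2 = -1 by norm_num] at h
  rw [Dk, integral_Icc_eq_integral_Ioc, ← intervalIntegral.integral_of_le (by norm_num)]
  rw [mul_left_comm]
  congr 1
  rw [← h, BB, ← intervalIntegral.integral_const_mul]
  congr 1
  ext x
  rw [← mul_assoc, ← Complex.exp_add]
  rw [show 1 - (1 - x) = x by ring, show 1 + (1 - x) = 2 - x by ring]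
  congr 2
  push_cast
  ring

lemma Dk_conj (k : ℝ) (u : ℂ) : Dk k ((starRingEnd ℂ) u) = (starRingEnd ℂ) (Dk k u) := by
  rw [Dk, Dk, map_mul, Complex.conj_ofReal, ← integral_conj]
  congr 2
  ext t
  rw [map_mul, Complex.conj_ofReal, ← Complex.exp_conj, map_mul, Complex.conj_ofReal]

lemma const_eq (k : ℝ) (hk : 0 < k) :
    Real.Gamma (k + 1/2) / (Real.Gamma (1/2) * Real.Gamma k) * (Real.Gamma k * 2 ^ k) =
    Real.Gamma (2 * k + 1) / (2 ^ k * Real.Gamma (k + 1)) := by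
  have h := Real.Gamma_mul_Gamma_add_half (k + 1/2)
  have e1 : k + 1/2 + 1/2 = k + 1 := by ring
  have e2 : 2 * (k + 1/2) = 2 * k + 1 := by ring
  have e3 : 1 - (2 * k + 1) = -(k + k) := by ring
  rw [e1, e2, e3, Real.rpow_neg two_pos.le, Real.rpow_add two_pos] at h
  rw [Real.Gamma_one_half_eq]
  have g1 := (Real.Gamma_pos_of_pos hk).ne'
  have g2 := (Real.Gamma_pos_of_pos (by linarith : 0 < k + 1)).ne'
  have g3 : (2:ℝ) ^ k ≠ 0 := by positivity
  have g4 : √Real.pi ≠ 0 := by positivity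
  field_simp at h ⊢
  linarith

/-- Asymptotics of the rank-one Dunkl kernel along the imaginary axis:
`s^k e^{∓is} D_k(±is) → e^{∓iπk/2} Γ(2k+1)/(2^k Γ(k+1))` as `s → +∞`. -/
theorem dunkl_stmt11 (k : ℝ) (hk : 0 < k) :
    Tendsto (fun s : ℝ => ((s ^ k : ℝ) : ℂ) * Complex.exp (-(Complex.I * (s : ℂ))) *
        Dk k (Complex.I * (s : ℂ)))
      atTop (nhds (Complex.exp (-(Complex.I * (Real.pi : ℂ) * (k : ℂ)) / 2) *
        ((Real.Gamma (2 * k + 1) / (2 ^ k * Real.Gamma (k + 1)) : ℝ) : ℂ))) ∧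
    Tendsto (fun s : ℝ => ((s ^ k : ℝ) : ℂ) * Complex.exp (Complex.I * (s : ℂ)) *
        Dk k (-(Complex.I * (s : ℂ))))
      atTop (nhds (Complex.exp (Complex.I * (Real.pi : ℂ) * (k : ℂ) / 2) *
        ((Real.Gamma (2 * k + 1) / (2 ^ k * Real.Gamma (k + 1)) : ℝ) : ℂ))) := by
  have second : Tendsto (fun s : ℝ => ((s ^ k : ℝ) : ℂ) * Complex.exp (Complex.I * (s : ℂ)) *
        Dk k (-(Complex.I * (s : ℂ))))
      atTop (nhds (Complex.exp (Complex.I * (Real.pi : ℂ) * (k : ℂ) / 2) *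
        ((Real.Gamma (2 * k + 1) / (2 ^ k * Real.Gamma (k + 1)) : ℝ) : ℂ))) := by
    have h := (BB_main k hk).const_mul
      ((Real.Gamma (k + 1/2) / (Real.Gamma (1/2) * Real.Gamma k) : ℝ) : ℂ)
    rw [← const_eq k hk]
    have hl : Complex.exp (Complex.I * (Real.pi : ℂ) * (k : ℂ) / 2) = Complex.I ^ (k : ℂ) := by
      rw [Complex.cpow_def_of_ne_zero Complex.I_ne_zero, Complex.log_I]
      ring_nf
    rw [hl, Complex.ofReal_mul, mul_left_comm]
    refine h.congr ?_
    intro s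
    rw [mul_assoc, Dk_eq]
    ring
  refine ⟨?_, second⟩
  have h := (Complex.continuous_conj.tendsto _).comp second
  convert h using 2
  · rename_i s
    simp only [Function.comp, map_mul, Complex.conj_ofReal, ← Complex.exp_conj, ← Dk_conj,
      Complex.conj_I, map_neg, neg_mul, neg_neg]
  · simp only [map_mul, map_div₀, Complex.conj_ofReal, ← Complex.exp_conj,
      Complex.conj_I, neg_mul, map_ofNat]
end
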